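/- If G is a 2-connected 4-regular planar graph and C and C' are the threaded circuit partitions of two planar embeddings of G, then |C| = |C'|; that is, the number of threaded circuits is an invariant of the abstract graph, independent of the embedding. -/

import Mathlib

/-!
A combinatorial map ("plane graph" via rotation system): `D` is the set of darts
(edge-ends); `rot` is the counterclockwise rotation of darts around their vertex
(vertices are `rot`-orbits); `inv` pairs the two darts of each edge
(edges are `inv`-orbits, of size 2).
-/
structure CombMap (D : Type) [Fintype D] [DecidableEq D] where
  rot : Equiv.Perm D
  inv : Equiv.Perm D
  inv_invol : ∀ d, inv (inv d) = d
  inv_ne : ∀ d, inv d ≠ d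

namespace CombMap

variable {D : Type} [Fintype D] [DecidableEq D] (M : CombMap D)

/-- Every vertex has degree 4: each `rot`-orbit has size exactly 4. -/
def FourRegular : Prop :=
  (∀ d, M.rot (M.rot (M.rot (M.rot d))) = d) ∧ (∀ d, M.rot d ≠ d) ∧
    (∀ d, M.rot (M.rot d) ≠ d)

/-- `IsThread d e`: the length-two path consisting of the edge of dart `d`
(traversed from the vertex of `d` to the vertex of `inv d`, the midpoint)
followed by the edge of dart `e` is a thread: `e` is a dart at the midpoint and
the two edges are not contiguous in the rotation at the midpoint. -/
def IsThread (d e : D) : Prop :=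
  M.rot.SameCycle (M.inv d) e ∧ e ≠ M.inv d ∧ e ≠ M.rot (M.inv d) ∧
    M.rot e ≠ M.inv d

/-- Traversing the edge of dart `d` and continuing straight through the vertex
at its far end: the unique continuation of a threaded circuit. -/
def threadStep (d : D) : D := M.rot (M.rot (M.inv d))

/-- A set of darts closed under continuing along threads and under reversal:
closed unions of (undirected) threaded circuits. -/
def ClosedTC (s : Set D) : Prop := ∀ x ∈ s, M.threadStep x ∈ s ∧ M.inv x ∈ s

/-- The set of darts of a single (undirected) threaded circuit: a minimal
nonempty set of darts closed under thread-continuation and reversal. -/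
def Circuit (s : Set D) : Prop :=
  s.Nonempty ∧ M.ClosedTC s ∧ ∀ t ⊆ s, t.Nonempty → M.ClosedTC t → t = s

/-- The number of circuits in the threaded circuit partition. -/
noncomputable def circuitCount : ℕ := Set.ncard {s : Set D | M.Circuit s}

/-- Reachability between darts by walking along edges and around vertices,
avoiding the darts in `A`. -/
def ReachAvoiding (A : Set D) (a b : D) : Prop :=
  Relation.ReflTransGen
    (fun x y => (y = M.rot x ∨ y = M.inv x) ∧ x ∉ A ∧ y ∉ A) a b

/-- The graph is connected. -/
def Connected : Prop := ∀ a b : D, M.ReachAvoiding ∅ a b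

/-- Number of vertices: the number of `rot`-orbits. -/
noncomputable def vertexCount : ℕ :=
  Set.ncard {s : Set D | ∃ d, s = {e | M.rot.SameCycle d e}}

/-- Number of edges: the number of `inv`-orbits. -/
noncomputable def edgeCount : ℕ :=
  Set.ncard {s : Set D | ∃ d, s = {e | M.inv.SameCycle d e}}

/-- Number of faces: the number of orbits of the face permutation `rot ∘ inv`. -/
noncomputable def faceCount : ℕ :=
  Set.ncard {s : Set D | ∃ d, s = {e | (M.rot * M.inv).SameCycle d e}}

/-- The embedding is planar (genus 0): Euler's formula `V - E + F = 2` holds. -/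
def EulerPlanar : Prop :=
  (M.vertexCount : ℤ) - (M.edgeCount : ℤ) + (M.faceCount : ℤ) = 2

end CombMap

/-!
Over `ZMod 2`, the number of threaded circuits is the dimension of the space of functions on the
darts that are constant on threaded circuits. The map `z ↦ z ∘ rot - z` sends this space onto a
crossing space; its kernel consists of the functions constant on edges and on vertices, which do not
depend on the rotation. So it suffices that the crossing spaces of the two embeddings agree.

By Euler's formula the faces generate the cycle space, which is determined by the abstract graph.
As all degrees are even, the constant `1` lies in the cycle space, and writing it in terms of faces
is a checkerboard colouring of them. Keeping only the faces of one colour induces, at every vertex,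
a projection of the differences between the values of a cycle at the four darts. Let `π` and `π'` be
these projections for the two embeddings. At each vertex `1 + ππ' + π'π` carries the pattern of a
function constant on the circuits of one embedding to the same pattern with respect to the other
rotation, so every element of one crossing space lies in the other.
-/

section ClassFunctions

variable {α : Type*} (K : Type*)

/-- The functions constant on the classes of `r`; their dimension counts the classes. -/
def classFunctions [Semiring K] (r : Setoid α) : Submodule K (α → K) where
  carrier := {f | r ≤ Setoid.ker f}
  add_mem' hf hg _ _ hab := congrArg₂ (· + ·) (hf hab) (hg hab)
  zero_mem' _ _ _ := rfl
  smul_mem' c _ hf _ _ hab := congrArg (c • ·) (hf hab)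

variable {K}

theorem classFunctions_sup [Semiring K] (r s : Setoid α) :
    classFunctions K (r ⊔ s) = classFunctions K r ⊓ classFunctions K s := by
  ext f
  exact sup_le_iff (a := r) (b := s) (c := Setoid.ker f)

theorem finrank_classFunctions [Finite α] [Semiring K] [StrongRankCondition K] (r : Setoid α) :
    Module.finrank K (classFunctions K r) = r.classes.ncard := by
  have := Fintype.ofFinite (Quotient r)
  let lift : classFunctions K r ≃ₗ[K] (Quotient r → K) :=
    { r.liftEquiv with
      map_add' _ _ := funext (Quotient.ind fun _ => rfl)
      map_smul' _ _ := funext (Quotient.ind fun _ => rfl) }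
  rw [lift.finrank_eq, Module.finrank_fintype_fun_eq_card, ← Nat.card_eq_fintype_card,
    Nat.card_congr r.quotientEquivClasses, Nat.card_coe_set_eq]

theorem finrank_classFunctions_top_le_one [Finite α] [Semiring K] [StrongRankCondition K] :
    Module.finrank K (classFunctions K (⊤ : Setoid α)) ≤ 1 := by
  rw [finrank_classFunctions, Set.ncard_le_one]
  rintro _ ⟨a, rfl⟩ _ ⟨b, rfl⟩
  rfl

end ClassFunctions

section LinearAlgebra

variable {K V W : Type*} [Field K] [AddCommGroup V] [Module K V] [AddCommGroup W] [Module K W]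

theorem finrank_map_add_finrank_inf_ker [FiniteDimensional K V] (f : V →ₗ[K] W)
    (p : Submodule K V) :
    Module.finrank K (p.map f) + Module.finrank K (p ⊓ f.ker : Submodule K V) =
      Module.finrank K p := by
  rw [← (f.domRestrict p).finrank_range_add_finrank_ker, LinearMap.range_domRestrict,
    LinearMap.ker_domRestrict, ← Submodule.finrank_map_subtype_eq, Submodule.map_comap_subtype]

variable {α : Type*} [Fintype α]

/-- The orthogonal complement with respect to the standard dot product. -/
def dotOrthogonal (p : Submodule K (α → K)) : Submodule K (α → K) :=
  LinearMap.BilinForm.orthogonal (dotProductBilin K K) p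

theorem mem_dotOrthogonal {p : Submodule K (α → K)} {f : α → K} :
    f ∈ dotOrthogonal p ↔ ∀ g ∈ p, g ⬝ᵥ f = 0 :=
  Iff.rfl

theorem dotOrthogonal_sup (p q : Submodule K (α → K)) :
    dotOrthogonal (p ⊔ q) = dotOrthogonal p ⊓ dotOrthogonal q := by
  ext f
  refine ⟨fun h => ⟨fun g hg => h g (Submodule.mem_sup_left hg),
    fun g hg => h g (Submodule.mem_sup_right hg)⟩, fun ⟨hp, hq⟩ => mem_dotOrthogonal.2 ?_⟩
  intro _ hg
  obtain ⟨g₁, hg₁, g₂, hg₂, rfl⟩ := Submodule.mem_sup.1 hg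
  rw [add_dotProduct, mem_dotOrthogonal.1 hp g₁ hg₁, mem_dotOrthogonal.1 hq g₂ hg₂, add_zero]

theorem finrank_add_finrank_dotOrthogonal (p : Submodule K (α → K)) :
    Module.finrank K p + Module.finrank K (dotOrthogonal p) = Fintype.card α := by
  have ker_eq_bot : (dotProductBilin K K : LinearMap.BilinForm K (α → K)).ker = ⊥ :=
    LinearMap.ker_eq_bot'.2 fun v hv => dotProduct_eq_zero v (LinearMap.congr_fun hv)
  rw [dotOrthogonal, LinearMap.BilinForm.finrank_add_finrank_orthogonal', ker_eq_bot, inf_bot_eq,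
    finrank_bot, add_zero, Module.finrank_fintype_fun_eq_card]

end LinearAlgebra

section CycleFunctions

variable {α : Type*} (σ : Equiv.Perm α)

theorem sameCycleSetoid_le_ker_iff {β : Type*} {σ : Equiv.Perm α} {f : α → β} :
    Equiv.Perm.SameCycle.setoid σ ≤ Setoid.ker f ↔ ∀ a, f (σ a) = f a := by
  constructor
  · exact fun h a => (h (Equiv.Perm.sameCycle_apply_right.2 .rfl)).symm
  · rintro h a _ ⟨n, rfl⟩
    refine Setoid.ker_def.2 ?_
    induction n with
    | zero => rfl
    | succ n ih => rw [add_comm, zpow_one_add, Equiv.Perm.mul_apply, h, ih]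
    | pred n ih =>
      rw [ih, ← h ((σ ^ (-(n : ℤ) - 1)) a), ← Equiv.Perm.mul_apply, ← zpow_one_add, add_sub_cancel]

theorem setOf_cycles_eq_classes :
    {s : Set α | ∃ a, s = {b | σ.SameCycle a b}} = (Equiv.Perm.SameCycle.setoid σ).classes := by
  refine Set.ext fun s => exists_congr fun a => ?_
  have cycle_comm : {b | σ.SameCycle a b} = {b | σ.SameCycle b a} :=
    Set.ext fun _ => Equiv.Perm.sameCycle_comm
  rw [cycle_comm]
  rfl

/-- The difference operator `f ↦ f ∘ σ - f` of a permutation. -/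
def shiftDiff (K : Type*) [Ring K] : (α → K) →ₗ[K] (α → K) :=
  LinearMap.funLeft K K σ - LinearMap.id

variable {σ} {K : Type*}

@[simp]
theorem shiftDiff_apply [Ring K] (f : α → K) (a : α) : shiftDiff σ K f a = f (σ a) - f a :=
  rfl

theorem mem_classFunctions_sameCycle [Semiring K] {f : α → K} :
    f ∈ classFunctions K (Equiv.Perm.SameCycle.setoid σ) ↔ ∀ a, f (σ a) = f a :=
  sameCycleSetoid_le_ker_iff

theorem ker_shiftDiff [Ring K] :
    (shiftDiff σ K).ker = classFunctions K (Equiv.Perm.SameCycle.setoid σ) := by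
  ext f
  simp only [LinearMap.mem_ker, mem_classFunctions_sameCycle, funext_iff, shiftDiff_apply,
    Pi.zero_apply, sub_eq_zero]

theorem dotProduct_shiftDiff_eq_zero [Fintype α] [Ring K] {g : α → K}
    (hg : g ∈ classFunctions K (Equiv.Perm.SameCycle.setoid σ)) (f : α → K) :
    g ⬝ᵥ shiftDiff σ K f = 0 := by
  rw [mem_classFunctions_sameCycle] at hg
  calc g ⬝ᵥ shiftDiff σ K f = ∑ a, g (σ a) * f (σ a) - ∑ a, g a * f a := by
        simp only [dotProduct, shiftDiff_apply, mul_sub, Finset.sum_sub_distrib, hg]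
    _ = 0 := by rw [Equiv.sum_comp σ fun a => g a * f a, sub_self]

theorem dotProduct_eq_zero_of_involutive [Fintype α] [Semiring K] [CharP K 2]
    (hσ : Function.Involutive σ) (hfix : ∀ a, σ a ≠ a) {f g : α → K}
    (hf : f ∈ classFunctions K (Equiv.Perm.SameCycle.setoid σ))
    (hg : g ∈ classFunctions K (Equiv.Perm.SameCycle.setoid σ)) : f ⬝ᵥ g = 0 := by
  rw [mem_classFunctions_sameCycle] at hf hg
  refine Finset.sum_involution (fun a _ => σ a) (fun a _ => ?_) (fun a _ _ => hfix a)
    (fun a _ => Finset.mem_univ _) (fun a _ => hσ a)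
  rw [hf, hg, CharTwo.add_self_eq_zero]

theorem range_shiftDiff [Fintype α] [Field K] :
    (shiftDiff σ K).range = dotOrthogonal (classFunctions K (Equiv.Perm.SameCycle.setoid σ)) := by
  refine Submodule.eq_of_le_of_finrank_eq ?_ ?_
  · rintro _ ⟨f, rfl⟩
    exact mem_dotOrthogonal.2 fun g hg => dotProduct_shiftDiff_eq_zero hg f
  · have rank_nullity := (shiftDiff σ K).finrank_range_add_finrank_ker
    have orthogonal_dim :=
      finrank_add_finrank_dotOrthogonal (classFunctions K (Equiv.Perm.SameCycle.setoid σ))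
    rw [ker_shiftDiff, Module.finrank_fintype_fun_eq_card] at rank_nullity
    lia

theorem range_shiftDiff_le_of_involutive [Ring K] [CharP K 2] (hσ : Function.Involutive σ) :
    (shiftDiff σ K).range ≤ classFunctions K (Equiv.Perm.SameCycle.setoid σ) := by
  rintro _ ⟨f, rfl⟩
  refine mem_classFunctions_sameCycle.2 fun a => ?_
  rw [shiftDiff_apply, shiftDiff_apply, hσ, CharTwo.sub_eq_add, CharTwo.sub_eq_add, add_comm]

theorem card_le_two_mul_finrank_of_involutive [Fintype α] [Field K] [CharP K 2]
    (hσ : Function.Involutive σ) : Fintype.card α ≤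
      2 * Module.finrank K (classFunctions K (Equiv.Perm.SameCycle.setoid σ)) := by
  have rank_nullity := (shiftDiff σ K).finrank_range_add_finrank_ker
  have range_le := Submodule.finrank_mono (range_shiftDiff_le_of_involutive (K := K) hσ)
  rw [ker_shiftDiff, Module.finrank_fintype_fun_eq_card] at rank_nullity
  lia

end CycleFunctions

section Saturated

variable {α : Type*}

theorem mem_classes_iff_minimal_saturated {r : Setoid α} {s : Set α} :
    s ∈ r.classes ↔ s.Nonempty ∧ r ≤ Setoid.ker (· ∈ s) ∧
      ∀ t ⊆ s, t.Nonempty → r ≤ Setoid.ker (· ∈ t) → t = s := by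
  have class_saturated (a : α) : r ≤ Setoid.ker (· ∈ {b | r b a}) := fun b c hbc =>
    propext ⟨r.trans (r.symm hbc), r.trans hbc⟩
  have class_subset {a : α} {t : Set α} (ha : a ∈ t) (ht : r ≤ Setoid.ker (· ∈ t)) :
      {b | r b a} ⊆ t := fun b hba => (ht hba).mpr ha
  constructor
  · rintro ⟨a, rfl⟩
    refine ⟨⟨a, r.refl a⟩, class_saturated a, fun t hta ⟨b, hb⟩ ht => hta.antisymm ?_⟩
    exact class_subset ((ht (hta hb)).mp hb) ht
  · rintro ⟨⟨a, ha⟩, hs, hmin⟩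
    exact ⟨a, (hmin _ (class_subset ha hs) ⟨a, r.refl a⟩ (class_saturated a)).symm⟩

theorem mapsTo_iff_apply_mem_iff [Finite α] {σ : Equiv.Perm α} {s : Set α} :
    Set.MapsTo σ s s ↔ ∀ a, σ a ∈ s ↔ a ∈ s := by
  refine ⟨fun h a => ⟨fun ha => ?_, @h a⟩, fun h a => (h a).2⟩
  simpa only [Equiv.symm_apply_apply] using Equiv.Perm.perm_symm_mapsTo_of_mapsTo σ h ha

end Saturated

namespace CombMap

variable {D : Type} [Fintype D] [DecidableEq D] (M : CombMap D)

/-- Two darts are equivalent if they lie at the same vertex. -/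
abbrev vertexSetoid : Setoid D := Equiv.Perm.SameCycle.setoid M.rot

/-- Two darts are equivalent if they belong to the same edge. -/
abbrev edgeSetoid : Setoid D := Equiv.Perm.SameCycle.setoid M.inv

/-- Two darts are equivalent if they lie on the boundary of the same face. -/
abbrev faceSetoid : Setoid D := Equiv.Perm.SameCycle.setoid (M.rot * M.inv)

/-- Two darts are equivalent if they lie on the same threaded circuit. When all degrees are four,
`M.rot * M.rot` exchanges opposite darts. -/
abbrev circuitSetoid : Setoid D :=
  M.edgeSetoid ⊔ Equiv.Perm.SameCycle.setoid (M.rot * M.rot)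

theorem closedTC_iff_circuitSetoid_le_ker {s : Set D} :
    M.ClosedTC s ↔ M.circuitSetoid ≤ Setoid.ker (· ∈ s) := by
  simp only [sup_le_iff, sameCycleSetoid_le_ker_iff, eq_iff_iff, ← mapsTo_iff_apply_mem_iff]
  refine ⟨fun h => ⟨fun d hd => (h d hd).2, fun d hd => ?_⟩,
    fun ⟨hinv, hrot⟩ d hd => ⟨hrot (hinv hd), hinv hd⟩⟩
  simpa only [threadStep, M.inv_invol, Equiv.Perm.mul_apply] using (h _ (h d hd).2).1

theorem setOf_circuit_eq_classes : {s | M.Circuit s} = M.circuitSetoid.classes := by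
  ext s
  simp only [Set.mem_ofPred_eq, Circuit, mem_classes_iff_minimal_saturated,
    closedTC_iff_circuitSetoid_le_ker]

theorem circuitCount_eq_finrank :
    M.circuitCount = Module.finrank (ZMod 2) (classFunctions (ZMod 2) M.circuitSetoid) := by
  rw [finrank_classFunctions, circuitCount, setOf_circuit_eq_classes]

variable {M} in
theorem Connected.edgeSetoid_sup_vertexSetoid (hconn : M.Connected) :
    M.edgeSetoid ⊔ M.vertexSetoid = ⊤ := by
  refine Setoid.eq_top_iff.2 fun a b => ?_
  induction hconn a b with
  | refl => exact Setoid.refl' _ a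
  | tail _ hstep ih =>
    refine Setoid.trans' _ ih ?_
    obtain ⟨rfl | rfl, -⟩ := hstep
    · exact le_sup_right (a := M.edgeSetoid) (Equiv.Perm.sameCycle_apply_right.2 .rfl)
    · exact le_sup_left (a := M.edgeSetoid) (Equiv.Perm.sameCycle_apply_right.2 .rfl)

/-- The mod 2 cycle space. Its elements are constant on edges and sum to zero at every vertex; the
encoding as an orthogonal complement shows that it depends only on the edges and the vertices, not
on the rotation. -/
def cycleSpace : Submodule (ZMod 2) (D → ZMod 2) :=
  dotOrthogonal (classFunctions (ZMod 2) M.edgeSetoid ⊔ classFunctions (ZMod 2) M.vertexSetoid)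

variable {M}

theorem apply_rot_of_mem_classFunctions_faceSetoid {f : D → ZMod 2}
    (hf : f ∈ classFunctions (ZMod 2) M.faceSetoid) (d : D) : f (M.rot d) = f (M.inv d) := by
  have := mem_classFunctions_sameCycle.1 hf (M.inv d)
  rwa [Equiv.Perm.mul_apply, M.inv_invol] at this

theorem mem_cycleSpace_iff {y : D → ZMod 2} :
    y ∈ M.cycleSpace ↔
      y ∈ (shiftDiff M.inv (ZMod 2)).range ∧ y ∈ (shiftDiff M.rot (ZMod 2)).range := by
  rw [cycleSpace, dotOrthogonal_sup, Submodule.mem_inf, range_shiftDiff, range_shiftDiff]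

theorem apply_inv_of_mem_cycleSpace {y : D → ZMod 2} (hy : y ∈ M.cycleSpace) (d : D) :
    y (M.inv d) = y d :=
  mem_classFunctions_sameCycle.1
    (range_shiftDiff_le_of_involutive M.inv_invol (mem_cycleSpace_iff.1 hy).1) d

theorem sum_rot_eq_zero_of_mem_cycleSpace (h4 : M.FourRegular) {y : D → ZMod 2}
    (hy : y ∈ M.cycleSpace) (d : D) :
    y d + y (M.rot d) + y (M.rot (M.rot d)) + y (M.rot (M.rot (M.rot d))) = 0 := by
  obtain ⟨f, rfl⟩ := (mem_cycleSpace_iff.1 hy).2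
  simp only [shiftDiff_apply, h4.1]
  ring

theorem shiftDiff_rot_mem_cycleSpace {f : D → ZMod 2}
    (hf : f ∈ classFunctions (ZMod 2) M.faceSetoid) :
    shiftDiff M.rot (ZMod 2) f ∈ M.cycleSpace := by
  refine mem_cycleSpace_iff.2 ⟨⟨f, funext fun d => ?_⟩, f, rfl⟩
  rw [shiftDiff_apply, shiftDiff_apply, apply_rot_of_mem_classFunctions_faceSetoid hf]

theorem classFunctions_faceSetoid_inf_vertexSetoid_le :
    classFunctions (ZMod 2) M.faceSetoid ⊓ classFunctions (ZMod 2) M.vertexSetoid ≤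
      classFunctions (ZMod 2) (M.edgeSetoid ⊔ M.vertexSetoid) := by
  rintro f ⟨hface, hvertex⟩
  rw [classFunctions_sup]
  refine ⟨mem_classFunctions_sameCycle.2 fun d => ?_, hvertex⟩
  rw [← apply_rot_of_mem_classFunctions_faceSetoid hface, mem_classFunctions_sameCycle.1 hvertex]

theorem faceCount_le_finrank_map_shiftDiff_add_one (hconn : M.edgeSetoid ⊔ M.vertexSetoid = ⊤) :
    M.faceCount ≤ Module.finrank (ZMod 2)
      ((classFunctions (ZMod 2) M.faceSetoid).map (shiftDiff M.rot (ZMod 2))) + 1 := by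
  have rank_nullity := finrank_map_add_finrank_inf_ker (shiftDiff M.rot (ZMod 2))
    (classFunctions (ZMod 2) M.faceSetoid)
  rw [ker_shiftDiff, finrank_classFunctions M.faceSetoid, ← setOf_cycles_eq_classes]
    at rank_nullity
  have ker_le := Submodule.finrank_mono (classFunctions_faceSetoid_inf_vertexSetoid_le (M := M))
  rw [hconn] at ker_le
  have := ker_le.trans finrank_classFunctions_top_le_one
  rw [faceCount]
  lia

theorem finrank_cycleSpace_add_vertexCount_le (hconn : M.edgeSetoid ⊔ M.vertexSetoid = ⊤) :
    Module.finrank (ZMod 2) M.cycleSpace + M.vertexCount ≤ M.edgeCount + 1 := by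
  have orthogonal_dim := finrank_add_finrank_dotOrthogonal
    (classFunctions (ZMod 2) M.edgeSetoid ⊔ classFunctions (ZMod 2) M.vertexSetoid)
  have sup_dim := Submodule.finrank_sup_add_finrank_inf_eq
    (classFunctions (ZMod 2) M.edgeSetoid) (classFunctions (ZMod 2) M.vertexSetoid)
  have card_le := card_le_two_mul_finrank_of_involutive (K := ZMod 2) M.inv_invol
  rw [← classFunctions_sup, hconn] at sup_dim
  have constants_dim := finrank_classFunctions_top_le_one (α := D) (K := ZMod 2)
  rw [finrank_classFunctions M.edgeSetoid, ← setOf_cycles_eq_classes] at sup_dim card_le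
  rw [finrank_classFunctions M.vertexSetoid, ← setOf_cycles_eq_classes] at sup_dim
  rw [cycleSpace, vertexCount, edgeCount]
  lia

theorem map_shiftDiff_classFunctions_faceSetoid (hconn : M.edgeSetoid ⊔ M.vertexSetoid = ⊤)
    (hplanar : M.EulerPlanar) :
    (classFunctions (ZMod 2) M.faceSetoid).map (shiftDiff M.rot (ZMod 2)) = M.cycleSpace := by
  refine Submodule.eq_of_le_of_finrank_le ?_ ?_
  · rintro _ ⟨f, hf, rfl⟩
    exact shiftDiff_rot_mem_cycleSpace hf
  · have := faceCount_le_finrank_map_shiftDiff_add_one hconn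
    have := finrank_cycleSpace_add_vertexCount_le hconn
    rw [EulerPlanar] at hplanar
    lia

theorem classFunctions_circuitSetoid_le_cycleSpace (h4 : M.FourRegular) :
    classFunctions (ZMod 2) M.circuitSetoid ≤ M.cycleSpace := by
  intro z hz
  rw [classFunctions_sup] at hz
  rw [cycleSpace, dotOrthogonal_sup]
  refine ⟨fun g hg => ?_, fun g hg => ?_⟩
  · exact dotProduct_eq_zero_of_involutive M.inv_invol M.inv_ne hg hz.1
  · have hg' : g ∈ classFunctions (ZMod 2) (Equiv.Perm.SameCycle.setoid (M.rot * M.rot)) :=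
      mem_classFunctions_sameCycle.2 fun d => by
        rw [Equiv.Perm.mul_apply, mem_classFunctions_sameCycle.1 hg,
          mem_classFunctions_sameCycle.1 hg]
    exact dotProduct_eq_zero_of_involutive (σ := M.rot * M.rot) h4.1 h4.2.2 hg' hz.2

theorem exists_checkerboard_splitting (h4 : M.FourRegular)
    (hconn : M.edgeSetoid ⊔ M.vertexSetoid = ⊤) (hplanar : M.EulerPlanar) :
    ∃ k : D → ZMod 2, (∀ d, k (M.rot d) = k d + 1) ∧ ∀ y ∈ M.cycleSpace, ∃ p ∈ M.cycleSpace,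
      ∀ d, p (M.rot d) - p d = k d * (y (M.rot d) - y d) := by
  have faces_generate := map_shiftDiff_classFunctions_faceSetoid hconn hplanar
  have one_mem : (1 : D → ZMod 2) ∈ M.cycleSpace :=
    classFunctions_circuitSetoid_le_cycleSpace h4 fun _ _ _ => rfl
  obtain ⟨k, hk, hk1⟩ := faces_generate.ge one_mem
  have hkrot (d : D) : k (M.rot d) = k d + 1 := by
    rw [add_comm, ← sub_eq_iff_eq_add, ← shiftDiff_apply, hk1, Pi.one_apply]
  refine ⟨k, hkrot, fun y hy => ?_⟩
  obtain ⟨f, hf, rfl⟩ := faces_generate.ge hy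
  have hkf : k * f ∈ classFunctions (ZMod 2) M.faceSetoid :=
    fun a b hab => congrArg₂ (· * ·) (hk hab) (hf hab)
  refine ⟨_, shiftDiff_rot_mem_cycleSpace hkf, fun d => ?_⟩
  simp only [shiftDiff_apply, Pi.mul_apply, hkrot]
  grind

variable (M) in
/-- The darts `rot d`, `rot² d`, `rot³ d`, which are the other darts at the vertex of `d` when that
vertex has degree four. -/
def otherDarts (d : D) : Fin 3 → D :=
  ![M.rot d, M.rot (M.rot d), M.rot (M.rot (M.rot d))]

theorem otherDarts_injective (h4 : M.FourRegular) (d : D) :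
    Function.Injective (M.otherDarts d) := by
  obtain ⟨-, hrot, hrot2⟩ := h4
  intro i j hij
  fin_cases i <;> fin_cases j <;> simp_all [otherDarts, eq_comm]

theorem sameCycle_rot_iff (h4 : M.FourRegular) {d e : D} :
    M.rot.SameCycle d e ↔
      e = d ∨ e = M.rot d ∨ e = M.rot (M.rot d) ∨ e = M.rot (M.rot (M.rot d)) := by
  constructor
  · intro hde
    obtain ⟨n, rfl⟩ := hde.exists_nat_pow_eq
    clear hde
    have hrot4 := h4.1 d
    induction n with
    | zero => exact .inl rfl
    | succ n ih =>
      rw [pow_succ', Equiv.Perm.mul_apply]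
      grind
  · rintro (rfl | rfl | rfl | rfl) <;>
      simp only [Equiv.Perm.sameCycle_apply_right, Equiv.Perm.SameCycle.rfl]

theorem range_otherDarts (h4 : M.FourRegular) (d : D) :
    Set.range (M.otherDarts d) = {e | M.rot.SameCycle d e ∧ e ≠ d} := by
  obtain ⟨hrot4, hrot, hrot2⟩ := h4
  have hrot3 : M.rot (M.rot (M.rot d)) ≠ d := fun h => hrot d (by simpa only [h] using hrot4 d)
  ext e
  simp only [otherDarts, Matrix.range_cons, Matrix.range_empty, Set.union_empty, Set.mem_union,
    Set.mem_singleton_iff, Set.mem_ofPred_eq, sameCycle_rot_iff ⟨hrot4, hrot, hrot2⟩]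
  grind

theorem exists_perm_otherDarts_eq {M' : CombMap D} (h4 : M.FourRegular) (h4' : M'.FourRegular)
    (hvert : M.vertexSetoid = M'.vertexSetoid) (d : D) :
    ∃ σ : Equiv.Perm (Fin 3), M'.otherDarts d = M.otherDarts d ∘ σ := by
  have range_eq : Set.range (M'.otherDarts d) = Set.range (M.otherDarts d) := by
    rw [range_otherDarts h4, range_otherDarts h4']
    exact congrArg (fun r : Setoid D => {e | r d e ∧ e ≠ d}) hvert.symm
  let toRange := Equiv.ofInjective _ (otherDarts_injective h4 d)
  refine ⟨(Equiv.ofInjective _ (otherDarts_injective h4' d)).trans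
    ((Equiv.setCongr range_eq).trans toRange.symm), funext fun i => ?_⟩
  exact (congrArg Subtype.val
    (toRange.apply_symm_apply ⟨M'.otherDarts d i, range_eq ▸ Set.mem_range_self i⟩)).symm

variable (M) in
/-- The differences between the values of `y` at the other darts of a vertex and at `d`. -/
def jump (d : D) (y : D → ZMod 2) : Fin 3 → ZMod 2 :=
  fun i => y (M.otherDarts d i) - y d

/-- The effect on jumps of keeping only the faces of one checkerboard colour. From `d` to `rot d`
the value changes by the contributions of the two faces outside that corner, which have the same
colour `κ`; so the jump to `rot d` is kept or killed according to `κ`, the jump to `rot³ d` is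
killed or kept, and the jump to `rot² d` is the sum of these two. -/
def checkerProj (κ : ZMod 2) (j : Fin 3 → ZMod 2) : Fin 3 → ZMod 2 :=
  ![κ * j 0, κ * j 0 + (κ + 1) * j 2, (κ + 1) * j 2]

theorem exists_jump_eq_checkerProj (h4 : M.FourRegular)
    (hconn : M.edgeSetoid ⊔ M.vertexSetoid = ⊤) (hplanar : M.EulerPlanar) :
    ∃ k : D → ZMod 2, ∀ y ∈ M.cycleSpace, ∃ p ∈ M.cycleSpace,
      ∀ d, M.jump d p = checkerProj (k d) (M.jump d y) := by
  obtain ⟨k, hk, hsplit⟩ := exists_checkerboard_splitting h4 hconn hplanar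
  refine ⟨k, fun y hy => ?_⟩
  obtain ⟨p, hp, hpy⟩ := hsplit y hy
  refine ⟨p, hp, fun d => ?_⟩
  have first_jump := hpy d
  have last_jump : p (M.rot (M.rot (M.rot d))) - p d =
      (k d + 1) * (y (M.rot (M.rot (M.rot d))) - y d) := by
    have last_to_first := hpy (M.rot (M.rot (M.rot d)))
    rw [h4.1, hk, hk, hk] at last_to_first
    grind
  have middle_jump : p (M.rot (M.rot d)) - p d = k d * (y (M.rot d) - y d) +
      (k d + 1) * (y (M.rot (M.rot (M.rot d))) - y d) := by
    have := sum_rot_eq_zero_of_mem_cycleSpace h4 hp d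
    grind
  funext i
  fin_cases i
  exacts [first_jump, middle_jump, last_jump]

theorem mem_classFunctions_circuitSetoid {z : D → ZMod 2} :
    z ∈ classFunctions (ZMod 2) M.circuitSetoid ↔
      (∀ d, z (M.inv d) = z d) ∧ ∀ d, z (M.rot (M.rot d)) = z d := by
  rw [classFunctions_sup]
  exact and_congr mem_classFunctions_sameCycle mem_classFunctions_sameCycle

theorem jump_of_mem_classFunctions_circuitSetoid {z : D → ZMod 2}
    (hz : z ∈ classFunctions (ZMod 2) M.circuitSetoid) (d : D) :
    M.jump d z = ![z (M.rot d) - z d, 0, z (M.rot d) - z d] := by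
  have hrot2 := (mem_classFunctions_circuitSetoid.1 hz).2
  funext i
  fin_cases i
  exacts [rfl, sub_eq_zero.2 (hrot2 d), congrArg (· - z d) (hrot2 (M.rot d))]

theorem add_commutator_checkerProj (σ : Equiv.Perm (Fin 3)) (κ κ' c : ZMod 2) :
    ![c, 0, c] ∘ σ + checkerProj κ' (checkerProj κ ![c, 0, c] ∘ σ) +
      checkerProj κ (checkerProj κ' (![c, 0, c] ∘ σ) ∘ σ.symm) ∘ σ = ![c, 0, c] := by
  decide +revert

variable (M) in
/-- The functions `z ∘ rot - z` for `z` constant on threaded circuits. As a dart and its rotation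
belong to the two strands crossing at their vertex, such a function marks the vertices where a
circuit with `z = 1` crosses one with `z = 0`. -/
def crossingSpace : Submodule (ZMod 2) (D → ZMod 2) :=
  (classFunctions (ZMod 2) M.circuitSetoid).map (shiftDiff M.rot (ZMod 2))

variable {M' : CombMap D}

theorem exists_mem_cycleSpace_jump_eq (h4 : M.FourRegular) (h4' : M'.FourRegular)
    (hedge : M.edgeSetoid = M'.edgeSetoid) (hvert : M.vertexSetoid = M'.vertexSetoid)
    (hconn : M.edgeSetoid ⊔ M.vertexSetoid = ⊤)
    (hplanar : M.EulerPlanar) (hplanar' : M'.EulerPlanar) {z : D → ZMod 2}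
    (hz : z ∈ classFunctions (ZMod 2) M.circuitSetoid) :
    ∃ z' ∈ M'.cycleSpace, ∀ d, M'.jump d z' = M.jump d z := by
  have cycleSpace_eq : M.cycleSpace = M'.cycleSpace := by rw [cycleSpace, cycleSpace, hedge, hvert]
  have hconn' : M'.edgeSetoid ⊔ M'.vertexSetoid = ⊤ := by rw [← hedge, ← hvert, hconn]
  obtain ⟨k, hk⟩ := exists_jump_eq_checkerProj h4 hconn hplanar
  obtain ⟨k', hk'⟩ := exists_jump_eq_checkerProj h4' hconn' hplanar'
  rw [← cycleSpace_eq] at hk' ⊢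
  have hzc := classFunctions_circuitSetoid_le_cycleSpace h4 hz
  obtain ⟨p, hp, hpz⟩ := hk z hzc
  obtain ⟨p', hp', hpz'⟩ := hk' z hzc
  obtain ⟨q, hq, hqp⟩ := hk' p hp
  obtain ⟨q', hq', hqp'⟩ := hk p' hp'
  refine ⟨z + q + q', add_mem (add_mem hzc hq) hq', fun d => ?_⟩
  obtain ⟨σ, hσ⟩ := exists_perm_otherDarts_eq h4 h4' hvert d
  have jump_eq (y : D → ZMod 2) : M'.jump d y = M.jump d y ∘ σ := by
    funext i
    exact congrArg (fun e => y e - y d) (congrFun hσ i)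
  have jump_eq_symm (y : D → ZMod 2) : M.jump d y = M'.jump d y ∘ σ.symm := by
    rw [jump_eq, Function.comp_assoc, Equiv.self_comp_symm, Function.comp_id]
  have jump_add (y₁ y₂ : D → ZMod 2) : M'.jump d (y₁ + y₂) = M'.jump d y₁ + M'.jump d y₂ :=
    funext fun i => add_sub_add_comm _ _ _ _
  calc M'.jump d (z + q + q')
      = M'.jump d z + M'.jump d q + M'.jump d q' := by rw [jump_add, jump_add]
    _ = M.jump d z ∘ σ + checkerProj (k' d) (checkerProj (k d) (M.jump d z) ∘ σ) +
          checkerProj (k d) (checkerProj (k' d) (M.jump d z ∘ σ) ∘ σ.symm) ∘ σ := by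
        rw [hqp, jump_eq p, hpz, jump_eq q', hqp', jump_eq_symm p', hpz', jump_eq z]
    _ = M.jump d z := by
        rw [jump_of_mem_classFunctions_circuitSetoid hz, add_commutator_checkerProj]

theorem crossingSpace_le_crossingSpace (h4 : M.FourRegular) (h4' : M'.FourRegular)
    (hedge : M.edgeSetoid = M'.edgeSetoid) (hvert : M.vertexSetoid = M'.vertexSetoid)
    (hconn : M.edgeSetoid ⊔ M.vertexSetoid = ⊤)
    (hplanar : M.EulerPlanar) (hplanar' : M'.EulerPlanar) :
    M.crossingSpace ≤ M'.crossingSpace := by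
  rintro _ ⟨z, hz, rfl⟩
  obtain ⟨z', hz', hjump⟩ :=
    exists_mem_cycleSpace_jump_eq h4 h4' hedge hvert hconn hplanar hplanar' hz
  simp only [jump_of_mem_classFunctions_circuitSetoid hz] at hjump
  have hrot2' (d : D) : z' (M'.rot (M'.rot d)) = z' d := sub_eq_zero.1 (congrFun (hjump d) 1)
  refine ⟨z', mem_classFunctions_circuitSetoid.2 ⟨apply_inv_of_mem_cycleSpace hz', hrot2'⟩, ?_⟩
  exact funext fun d => congrFun (hjump d) 0

theorem classFunctions_circuitSetoid_inf_vertexSetoid :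
    classFunctions (ZMod 2) M.circuitSetoid ⊓ classFunctions (ZMod 2) M.vertexSetoid =
      classFunctions (ZMod 2) (M.edgeSetoid ⊔ M.vertexSetoid) := by
  ext z
  rw [classFunctions_sup M.edgeSetoid M.vertexSetoid, Submodule.mem_inf, Submodule.mem_inf,
    mem_classFunctions_circuitSetoid, mem_classFunctions_sameCycle, mem_classFunctions_sameCycle]
  refine and_congr_left fun hvertex => and_iff_left fun d => ?_
  rw [hvertex, hvertex]

variable (M) in
theorem circuitCount_eq_finrank_crossingSpace_add_finrank :
    M.circuitCount = Module.finrank (ZMod 2) M.crossingSpace +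
      Module.finrank (ZMod 2) (classFunctions (ZMod 2) (M.edgeSetoid ⊔ M.vertexSetoid)) := by
  rw [circuitCount_eq_finrank, crossingSpace, ← classFunctions_circuitSetoid_inf_vertexSetoid,
    ← ker_shiftDiff, finrank_map_add_finrank_inf_ker]

end CombMap

theorem threaded_circuit_count_is_embedding_invariant_general
    {D : Type} [Fintype D] [DecidableEq D] (M M' : CombMap D)
    (hinv : M.inv = M'.inv)
    (hvert : ∀ d e : D, M.rot.SameCycle d e ↔ M'.rot.SameCycle d e)
    (h4 : M.FourRegular) (h4' : M'.FourRegular) (hconn : M.Connected)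
    (hpl : M.EulerPlanar) (hpl' : M'.EulerPlanar) :
    M.circuitCount = M'.circuitCount := by
  have edge_eq : M.edgeSetoid = M'.edgeSetoid := congrArg Equiv.Perm.SameCycle.setoid hinv
  have vertex_eq : M.vertexSetoid = M'.vertexSetoid := Setoid.ext hvert
  have connected := hconn.edgeSetoid_sup_vertexSetoid
  have connected' : M'.edgeSetoid ⊔ M'.vertexSetoid = ⊤ := by
    rw [← edge_eq, ← vertex_eq, connected]
  have crossing_eq : M.crossingSpace = M'.crossingSpace :=
    (CombMap.crossingSpace_le_crossingSpace h4 h4' edge_eq vertex_eq connected hpl hpl').antisymm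
      (CombMap.crossingSpace_le_crossingSpace h4' h4 edge_eq.symm vertex_eq.symm connected' hpl'
        hpl)
  rw [M.circuitCount_eq_finrank_crossingSpace_add_finrank,
    M'.circuitCount_eq_finrank_crossingSpace_add_finrank, crossing_eq, edge_eq, vertex_eq]

/-- If `G` is a 2-connected 4-regular planar graph, and `M`,
`M'` are two planar embeddings of `G` (combinatorial maps on the same darts
with the same edge involution and the same vertices, i.e. the two rotations
have the same orbits), with threaded circuit partitions `C` and `C'`, then
`|C| = |C'|`: the number of threaded circuits is independent of the embedding.
2-connectedness: removing (the darts at) any single vertex leaves the remaining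
darts mutually reachable. -/
theorem threaded_circuit_count_is_embedding_invariant
    {D : Type} [Fintype D] [DecidableEq D] (M M' : CombMap D)
    (hinv : M.inv = M'.inv)
    (hvert : ∀ d e : D, M.rot.SameCycle d e ↔ M'.rot.SameCycle d e)
    (h4 : M.FourRegular) (h4' : M'.FourRegular)
    (hconn : M.Connected) (hconn' : M'.Connected)
    (hpl : M.EulerPlanar) (hpl' : M'.EulerPlanar)
    (h2conn : ∀ v a b : D, ¬ M.rot.SameCycle v a → ¬ M.rot.SameCycle v b →
      M.ReachAvoiding {x | M.rot.SameCycle v x} a b) :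
    M.circuitCount = M'.circuitCount := by
  exact threaded_circuit_count_is_embedding_invariant_general M M' hinv hvert h4 h4' hconn hpl hpl'
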